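/- Let m ≥ 10 and a ∈ [ √(2 log 2)/m, 1 ]. Let ν(x) = (2π)^{−1/2} e^{−x²/2}, and π(x) = (1 − e^{−a²m²/2}) g_m(x) + e^{−a²m²/2} u_m(x), where g_m(x) = (2π)^{−1/2} e^{−(x−m)²/2} and u_m(x) = e^{−d(x,[−m,2m])²/2} / (3m + √(2π)). Then for every λ ∈ [0,1], ∫_{m(1−a)/2}^{m(1−a)} ν(x)^{1−λ} π(x)^λ dx ≤ 5 a m² · e^{ −λ a² m²/2 − (1−λ)(1−a)² m²/8 }. -/

import Mathlib

open MeasureTheory Real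

/-- The standard Gaussian density on ℝ. -/
noncomputable def stdGauss (x : ℝ) : ℝ := Real.exp (-x ^ 2 / 2) / Real.sqrt (2 * Real.pi)

/-- The density of N(m, 1). -/
noncomputable def gaussAt (m x : ℝ) : ℝ := Real.exp (-(x - m) ^ 2 / 2) / Real.sqrt (2 * Real.pi)

/-- The smoothed uniform density on [−m, 2m]. -/
noncomputable def smUnif (m x : ℝ) : ℝ :=
  Real.exp (-(Metric.infDist x (Set.Icc (-m) (2 * m))) ^ 2 / 2) / (3 * m + Real.sqrt (2 * Real.pi))

/-- The general unimodal target π = (1 − e^{−a²m²/2}) N(m,1) + e^{−a²m²/2} u_m. -/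
noncomputable def piDensA (m a x : ℝ) : ℝ :=
  (1 - Real.exp (-(a ^ 2 * m ^ 2) / 2)) * gaussAt m x
    + Real.exp (-(a ^ 2 * m ^ 2) / 2) * smUnif m x

/-! On the window `[m(1 - a)/2, m(1 - a)]` the integrand is dominated by a constant. There
`x ≥ m(1 - a)/2`, so `ν ≤ exp (-(1 - a)²m²/8)`; and `m - x ≥ am`, so the Gaussian part of `π` is at
most `exp (-a²m²/2) / 2`, the same order as the weight of its uniform part. Since `√(2π) ≥ 2`, the
normalizations absorb the sum of the two parts. The constant then multiplies the width `m(1 - a)/2`,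
which is at most `5am²` because `am ≥ √(2 log 2) ≥ 1`. -/

section Elementary

lemma two_le_sqrt_two_mul_pi : 2 ≤ √(2 * π) :=
  le_sqrt_of_sq_le (by linarith [pi_gt_three])

lemma one_le_sqrt_two_mul_log_two : 1 ≤ √(2 * log 2) :=
  one_le_sqrt.mpr (by linarith [log_two_gt_d9])

lemma rpow_one_sub_mul_rpow_le_exp {u v s t lam : ℝ} (hu : 0 ≤ u) (hv : 0 ≤ v)
    (hus : u ≤ exp s) (hvt : v ≤ exp t) (hlam : lam ∈ Set.Icc (0 : ℝ) 1) :
    u ^ (1 - lam) * v ^ lam ≤ exp ((1 - lam) * s + lam * t) :=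
  calc u ^ (1 - lam) * v ^ lam
      ≤ exp s ^ (1 - lam) * exp t ^ lam :=
        mul_le_mul (rpow_le_rpow hu hus (sub_nonneg.mpr hlam.2)) (rpow_le_rpow hv hvt hlam.1)
          (rpow_nonneg hv _) (rpow_nonneg (exp_nonneg s) _)
    _ = exp ((1 - lam) * s + lam * t) := by
        rw [← exp_mul, ← exp_mul, ← exp_add, mul_comm s, mul_comm t]

lemma setIntegral_Icc_le_of_norm_le {f : ℝ → ℝ} {b c C : ℝ} (hbc : b ≤ c)
    (hf : ∀ x ∈ Set.Icc b c, ‖f x‖ ≤ C) : ∫ x in Set.Icc b c, f x ≤ (c - b) * C :=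
  calc ∫ x in Set.Icc b c, f x
      ≤ C * volume.real (Set.Icc b c) :=
        (le_norm_self _).trans (norm_setIntegral_le_of_norm_le_const measure_Icc_lt_top hf)
    _ = (c - b) * C := by rw [volume_real_Icc_of_le hbc, mul_comm]

end Elementary

section Densities

variable {m a x : ℝ}

lemma gaussAt_zero_left (x : ℝ) : gaussAt 0 x = stdGauss x := by
  rw [gaussAt, stdGauss, sub_zero]

lemma gaussAt_nonneg (m x : ℝ) : 0 ≤ gaussAt m x := by
  unfold gaussAt; positivity

lemma smUnif_nonneg (hm : 0 ≤ m) (x : ℝ) : 0 ≤ smUnif m x := by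
  unfold smUnif; positivity

lemma gaussAt_le_exp_div_two {d : ℝ} (hd : |d| ≤ |x - m|) :
    gaussAt m x ≤ exp (-d ^ 2 / 2) / 2 := by
  have hexp : exp (-(x - m) ^ 2 / 2) ≤ exp (-d ^ 2 / 2) :=
    exp_le_exp.mpr (by linarith [sq_le_sq.mpr hd])
  exact div_le_div₀ (exp_nonneg _) hexp two_pos two_le_sqrt_two_mul_pi

lemma stdGauss_nonneg (x : ℝ) : 0 ≤ stdGauss x :=
  gaussAt_zero_left x ▸ gaussAt_nonneg 0 x

lemma stdGauss_le_exp {d : ℝ} (hd : |d| ≤ |x|) : stdGauss x ≤ exp (-d ^ 2 / 2) :=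
  calc stdGauss x
      = gaussAt 0 x := (gaussAt_zero_left x).symm
    _ ≤ exp (-d ^ 2 / 2) / 2 := gaussAt_le_exp_div_two (by rwa [sub_zero])
    _ ≤ exp (-d ^ 2 / 2) := half_le_self (exp_nonneg _)

lemma smUnif_le_half (hm : 0 ≤ m) (x : ℝ) : smUnif m x ≤ 1 / 2 := by
  have hexp : exp (-(Metric.infDist x (Set.Icc (-m) (2 * m))) ^ 2 / 2) ≤ 1 :=
    exp_le_one_iff.mpr (by linarith [sq_nonneg (Metric.infDist x (Set.Icc (-m) (2 * m)))])
  exact div_le_div₀ zero_le_one hexp two_pos (by linarith [two_le_sqrt_two_mul_pi])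

lemma piDensA_nonneg (hm : 0 ≤ m) (a x : ℝ) : 0 ≤ piDensA m a x := by
  have hweight : exp (-(a ^ 2 * m ^ 2) / 2) ≤ 1 :=
    exp_le_one_iff.mpr (by linarith [show 0 ≤ a ^ 2 * m ^ 2 by positivity])
  exact add_nonneg (mul_nonneg (sub_nonneg.mpr hweight) (gaussAt_nonneg m x))
    (mul_nonneg (exp_nonneg _) (smUnif_nonneg hm x))

lemma piDensA_le_exp (hm : 0 ≤ m) (hx : |a * m| ≤ |x - m|) :
    piDensA m a x ≤ exp (-(a ^ 2 * m ^ 2) / 2) := by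
  set E := exp (-(a ^ 2 * m ^ 2) / 2) with hE
  have hE_nonneg : 0 ≤ E := exp_nonneg _
  have hgauss : gaussAt m x ≤ E / 2 := by
    simpa only [hE, mul_pow] using gaussAt_le_exp_div_two hx
  calc piDensA m a x
      = (1 - E) * gaussAt m x + E * smUnif m x := rfl
    _ ≤ 1 * gaussAt m x + E * smUnif m x := by
        gcongr
        · exact gaussAt_nonneg m x
        · linarith
    _ ≤ 1 * (E / 2) + E * (1 / 2) := by
        gcongr
        exact smUnif_le_half hm x
    _ = E := by ring

lemma stdGauss_rpow_mul_piDensA_rpow_le_exp {lam : ℝ} (hm : 0 ≤ m) (ha : 0 ≤ a)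
    (hlam : lam ∈ Set.Icc (0 : ℝ) 1) (hx : x ∈ Set.Icc (m * (1 - a) / 2) (m * (1 - a))) :
    stdGauss x ^ (1 - lam) * piDensA m a x ^ lam
      ≤ exp (-(lam * a ^ 2 * m ^ 2) / 2 - (1 - lam) * (1 - a) ^ 2 * m ^ 2 / 8) := by
  obtain ⟨hx_lower, hx_upper⟩ := hx
  have hfar_zero : |m * (1 - a) / 2| ≤ |x| := abs_le_abs_of_nonneg (by linarith) hx_lower
  have hfar_mode : |a * m| ≤ |x - m| := by
    rw [abs_sub_comm]
    exact abs_le_abs_of_nonneg (mul_nonneg ha hm) (by linarith)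
  calc stdGauss x ^ (1 - lam) * piDensA m a x ^ lam
      ≤ exp ((1 - lam) * (-(m * (1 - a) / 2) ^ 2 / 2) + lam * (-(a ^ 2 * m ^ 2) / 2)) :=
        rpow_one_sub_mul_rpow_le_exp (stdGauss_nonneg x) (piDensA_nonneg hm a x)
          (stdGauss_le_exp hfar_zero) (piDensA_le_exp hm hfar_mode) hlam
    _ = exp (-(lam * a ^ 2 * m ^ 2) / 2 - (1 - lam) * (1 - a) ^ 2 * m ^ 2 / 8) := by
        congr 1; ring

lemma half_mul_one_sub_le_five_mul_mul_sq (hm : 0 < m) (ha : √(2 * log 2) / m ≤ a) :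
    m * (1 - a) / 2 ≤ 5 * a * m ^ 2 := by
  have ha_nonneg : 0 ≤ a := (div_nonneg (sqrt_nonneg _) hm.le).trans ha
  have ham : 1 ≤ a * m := one_le_sqrt_two_mul_log_two.trans ((div_le_iff₀ hm).mp ha)
  calc m * (1 - a) / 2
      ≤ 5 * m * 1 := by linarith [mul_nonneg hm.le ha_nonneg]
    _ ≤ 5 * m * (a * m) := by gcongr
    _ = 5 * a * m ^ 2 := by ring

end Densities

theorem unimodal_tempering_middle_unnormalized_mass_upper_bound_general
    {m a lam : ℝ} (hm : 0 ≤ m) (ha : a ∈ Set.Icc (0 : ℝ) 1) (hlam : lam ∈ Set.Icc (0 : ℝ) 1) :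
    (∫ x in Set.Icc (m * (1 - a) / 2) (m * (1 - a)),
        stdGauss x ^ (1 - lam) * piDensA m a x ^ lam)
      ≤ m * (1 - a) / 2
          * exp (-(lam * a ^ 2 * m ^ 2) / 2 - (1 - lam) * (1 - a) ^ 2 * m ^ 2 / 8) := by
  have hend_nonneg : 0 ≤ m * (1 - a) := mul_nonneg hm (sub_nonneg.mpr ha.2)
  have hintegrand_nonneg (x : ℝ) : 0 ≤ stdGauss x ^ (1 - lam) * piDensA m a x ^ lam :=
    mul_nonneg (rpow_nonneg (stdGauss_nonneg x) _) (rpow_nonneg (piDensA_nonneg hm a x) _)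
  simpa only [sub_half] using
    setIntegral_Icc_le_of_norm_le (half_le_self hend_nonneg) fun x hx ↦
      (norm_of_nonneg (hintegrand_nonneg x)).trans_le
        (stdGauss_rpow_mul_piDensA_rpow_le_exp hm ha.1 hlam hx)

/-- For m ≥ 10, a ∈ [√(2 log 2)/m, 1] and λ ∈ [0,1],
∫_{m(1−a)/2}^{m(1−a)} ν^{1−λ}π^λ ≤ 5am²·e^{−λa²m²/2 − (1−λ)(1−a)²m²/8}. -/
theorem unimodal_tempering_middle_unnormalized_mass_upper_bound
    (m a : ℝ) (hm : 10 ≤ m)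
    (ha : a ∈ Set.Icc (Real.sqrt (2 * Real.log 2) / m) 1)
    (lam : ℝ) (hlam : lam ∈ Set.Icc (0 : ℝ) 1) :
    (∫ x in Set.Icc (m * (1 - a) / 2) (m * (1 - a)),
        (stdGauss x) ^ (1 - lam) * (piDensA m a x) ^ lam)
      ≤ 5 * a * m ^ 2
          * Real.exp (-(lam * a ^ 2 * m ^ 2) / 2 - (1 - lam) * (1 - a) ^ 2 * m ^ 2 / 8) := by
  have hm_pos : 0 < m := by linarith
  have ha_nonneg : 0 ≤ a := (div_nonneg (sqrt_nonneg _) hm_pos.le).trans ha.1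
  exact (unimodal_tempering_middle_unnormalized_mass_upper_bound_general hm_pos.le
    ⟨ha_nonneg, ha.2⟩ hlam).trans (mul_le_mul_of_nonneg_right
      (half_mul_one_sub_le_five_mul_mul_sq hm_pos ha.1) (exp_nonneg _))
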